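/- Suppose ν(dy) = exp(−U(y)) dy is a probability measure with convex support, finite second moment, U of class C² on the support, and ∇²U(y) ⪰ κ I_d for all y in the support (ν is κ-semi-log-concave) for some κ ∈ ℝ. Then for every t ∈ (0,1) such that κ a_t² + b_t² > 0 and every x ∈ ℝ^d, ∇_x v(t,x) ⪯ ((κ a_t ȧ_t + b_t ḃ_t)/(κ a_t² + b_t²)) I_d. -/

import Mathlib

open MeasureTheory Real Set
open scoped RealInnerProductSpace ENNReal

noncomputable section

lemma bm_compact {K L : Set ℝ} (hK : IsCompact K) (hL : IsCompact L) (hKn : K.Nonempty)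
    (hLn : L.Nonempty) {C : Set ℝ} (hC : ∀ x ∈ K, ∀ y ∈ L, x + y ∈ C) :
    volume K + volume L ≤ volume C := by
  have hM := hK.sSup_mem hKn
  have hm := hL.sInf_mem hLn
  set M := sSup K
  set m := sInf L
  have h1 : volume ((fun x => x + m) '' K) = volume K := by
    simp
  have h2 : volume ((fun y => M + y) '' L) = volume L := by
    simp
  have hd : AEDisjoint volume ((fun x => x + m) '' K) ((fun y => M + y) '' L) := by
    refine measure_mono_null (t := {M + m}) ?_ (by simp)
    rintro z ⟨⟨x, hx, rfl⟩, ⟨y, hy, hxy⟩⟩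
    have := le_csSup hK.bddAbove hx
    have := csInf_le hL.bddBelow hy
    simp only [mem_singleton_iff] at *
    linarith
  rw [← h1, ← h2, ← measure_union₀ ((hL.image (by fun_prop)).measurableSet.nullMeasurableSet) hd]
  apply measure_mono
  rintro z (⟨x, hx, rfl⟩ | ⟨y, hy, rfl⟩)
  · exact hC _ hx _ hm
  · exact hC _ hM _ hy

lemma bm_meas {A B C : Set ℝ} (hA : MeasurableSet A) (hB : MeasurableSet B) (hAn : A.Nonempty)
    (hBn : B.Nonempty) (hC : ∀ x ∈ A, ∀ y ∈ B, x + y ∈ C) :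
    volume A + volume B ≤ volume C := by
  obtain ⟨x0, hx0⟩ := hAn
  obtain ⟨y0, hy0⟩ := hBn
  rw [hA.measure_eq_iSup_isCompact, hB.measure_eq_iSup_isCompact]
  simp only [iSup_and']
  have key : ∀ K, K ⊆ A → IsCompact K → ∀ L, L ⊆ B → IsCompact L →
      volume K + volume L ≤ volume C := by
    intro K hKA hK L hLB hL
    refine le_trans (add_le_add (measure_mono (subset_insert x0 K))
      (measure_mono (subset_insert y0 L))) ?_
    refine bm_compact (hK.insert x0) (hL.insert y0) (by simp) (by simp) ?_
    intro x hx y hy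
    exact hC _ (insert_subset hx0 hKA hx) _ (insert_subset hy0 hLB hy)
  refine ENNReal.biSup_add_biSup_le' (p := fun K => K ⊆ A ∧ IsCompact K)
    (q := fun K => K ⊆ B ∧ IsCompact K) ⟨∅, by simp⟩ ⟨∅, by simp⟩ ?_
  intro K hK L hL
  exact key K hK.1 hK.2 L hL.1 hL.2

lemma pl_unit {f g h : ℝ → ℝ} (hf : Measurable f) (hg : Measurable g) 
    (hh : Measurable h)
    (f0 : ∀ x, 0 ≤ f x) (g0 : ∀ x, 0 ≤ g x) (h0 : ∀ x, 0 ≤ h x)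
    (f1 : ∀ x, f x ≤ 1) (g1 : ∀ x, g x ≤ 1)
    (hfs : ∀ t < 1, ∃ x, t < f x) (hgs : ∀ t < 1, ∃ x, t < g x)
    (H : ∀ x y t, 0 < t → t < f x → t < g y → t < h ((x + y) / 2)) :
    (∫⁻ x, ENNReal.ofReal (f x)) + (∫⁻ x, ENNReal.ofReal (g x)) ≤
      2 * ∫⁻ x, ENNReal.ofReal (h x) := by
  rw [lintegral_eq_lintegral_meas_lt _ (.of_forall f0) hf.aemeasurable,
    lintegral_eq_lintegral_meas_lt _ (.of_forall g0) hg.aemeasurable,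
    lintegral_eq_lintegral_meas_lt _ (.of_forall h0) hh.aemeasurable,
    ← lintegral_const_mul' _ _ (by simp), ← lintegral_add_left]
  · refine setLIntegral_mono' measurableSet_Ioi ?_
    intro t ht
    by_cases ht1 : t < 1
    · have : 2 * volume {a | t < h a} = volume ((fun x => (2:ℝ)⁻¹ * x) ⁻¹' {a | t < h a}) := by
        rw [Real.volume_preimage_mul_left (by norm_num)]
        congr 1
        simp
      rw [this]
      refine bm_meas (hf measurableSet_Ioi) (hg measurableSet_Ioi) (hfs t ht1) (hgs t ht1) ?_
      intro x hx y hy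
      have := H x y t ht hx hy
      simp only [mem_preimage, mem_ofPred_eq]
      convert this using 2
      ring
    · have e1 : {a | t < f a} = ∅ := by
        ext x; simp; linarith [f1 x]
      have e2 : {a | t < g a} = ∅ := by
        ext x; simp; linarith [g1 x]
      simp [e1, e2]
  · exact (Antitone.measurable fun s t hst => measure_mono fun x hx => lt_of_le_of_lt hst hx)

lemma pl_bdd {f g h : ℝ → ℝ≥0∞} (hf : Measurable f) (hg : Measurable g) (hh : Measurable h)
    {N : ℝ≥0∞} (hN : N ≠ ⊤) (fN : ∀ x, f x ≤ N) (gN : ∀ x, g x ≤ N)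
    (H : ∀ x y, f x * g y ≤ h ((x + y) / 2) ^ 2) :
    (∫⁻ x, f x) * (∫⁻ x, g x) ≤ (∫⁻ x, h x) ^ 2 := by
  obtain ⟨A, hA⟩ : ∃ A, A = ⨆ x, f x := ⟨_, rfl⟩
  obtain ⟨B, hB⟩ : ∃ A, A = ⨆ x, g x := ⟨_, rfl⟩
  have fA : ∀ x, f x ≤ A := fun x => hA ▸ le_iSup f x
  have gB : ∀ x, g x ≤ B := fun x => hB ▸ le_iSup g x
  have hAt : A ≠ ⊤ := ne_top_of_le_ne_top hN (hA ▸ iSup_le fN)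
  have hBt : B ≠ ⊤ := ne_top_of_le_ne_top hN (hB ▸ iSup_le gN)
  by_cases hA0 : A = 0
  · have : ∀ x, f x = 0 := fun x => by simpa [hA0] using fA x
    simp [this]
  by_cases hB0 : B = 0
  · have : ∀ x, g x = 0 := fun x => by simpa [hB0] using gB x
    simp [this]
  obtain ⟨r, hr⟩ : ∃ r : ℝ≥0∞, r ^ 2 = A * B := ⟨(A * B) ^ (2:ℝ)⁻¹, by
    rw [← ENNReal.rpow_natCast, ← ENNReal.rpow_mul]; simp⟩
  have hr0 : r ≠ 0 := by
    rintro rfl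
    simp at hr
    tauto
  have hrt : r ≠ ⊤ := by
    rintro rfl
    have : A * B ≠ ⊤ := ENNReal.mul_ne_top hAt hBt
    apply this; rw [← hr]; simp
  have f1 : ∀ x, f x / A ≤ 1 := fun x => ENNReal.div_le_of_le_mul (by simpa using fA x)
  have g1 : ∀ x, g x / B ≤ 1 := fun x => ENNReal.div_le_of_le_mul (by simpa using gB x)
  have key := pl_unit (f := fun x => (f x / A).toReal) (g := fun x => (g x / B).toReal)
    (h := fun x => (min (h x / r) 1).toReal) (by fun_prop) (by fun_prop) (by fun_prop)
    (fun _ => ENNReal.toReal_nonneg) (fun _ => ENNReal.toReal_nonneg)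
    (fun _ => ENNReal.toReal_nonneg)
    (fun x => ENNReal.toReal_mono (by simp) (f1 x)) (fun x => ENNReal.toReal_mono (by simp) (g1 x))
    ?_ ?_ ?_
  · have e1 : ∀ x, ENNReal.ofReal ((f x / A).toReal) = A⁻¹ * f x := fun x => by
      rw [ENNReal.ofReal_toReal (ne_top_of_le_ne_top (by simp) (f1 x)), mul_comm]; rfl
    have e2 : ∀ x, ENNReal.ofReal ((g x / B).toReal) = B⁻¹ * g x := fun x => by
      rw [ENNReal.ofReal_toReal (ne_top_of_le_ne_top (by simp) (g1 x)), mul_comm]; rfl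
    have e3 : ∀ x, ENNReal.ofReal ((min (h x / r) 1).toReal) ≤ r⁻¹ * h x := fun x => by
      rw [ENNReal.ofReal_toReal (by simp), mul_comm]; exact min_le_left _ _
    simp only [e1, e2] at key
    have key2 := key.trans (mul_le_mul_right (lintegral_mono e3) 2)
    rw [lintegral_const_mul _ hf, lintegral_const_mul _ hg, lintegral_const_mul _ hh] at key2
    have amgm : ∀ a b c : ℝ≥0∞, a + b ≤ 2 * c → a * b ≤ c ^ 2 := by
      intro a b c habc
      by_cases hc : c = ⊤
      · simp [hc]
      have hab : a + b ≠ ⊤ := ne_top_of_le_ne_top (ENNReal.mul_ne_top (by simp) hc) habc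
      have ha : a ≠ ⊤ := fun h => hab (by simp [h])
      have hb : b ≠ ⊤ := fun h => hab (by simp [h])
      lift a to NNReal using ha
      lift b to NNReal using hb
      lift c to NNReal using hc
      norm_cast at habc ⊢
      have h' : (a:ℝ) + b ≤ 2 * c := by exact_mod_cast habc
      have : (a:ℝ) * b ≤ c ^ 2 := by
        nlinarith [sq_nonneg ((a:ℝ) - b), a.2, b.2, c.2, a.coe_nonneg, b.coe_nonneg, c.coe_nonneg]
      exact_mod_cast this
    have key3 := amgm _ _ _ key2
    have key4 := mul_le_mul_right key3 (A * B)
    calc (∫⁻ x, f x) * (∫⁻ x, g x) = (A * A⁻¹) * (B * B⁻¹) * ((∫⁻ x, f x) * (∫⁻ x, g x)) := by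
          rw [ENNReal.mul_inv_cancel hA0 hAt, ENNReal.mul_inv_cancel hB0 hBt]; simp
      _ = A * B * (A⁻¹ * (∫⁻ x, f x) * (B⁻¹ * ∫⁻ x, g x)) := by ring
      _ ≤ _ := key4
      _ = (r * r⁻¹) ^ 2 * (∫⁻ x, h x) ^ 2 := by rw [← hr]; ring
      _ = _ := by rw [ENNReal.mul_inv_cancel hr0 hrt]; simp
  · intro t ht
    by_contra! hcon
    have : A ≤ ENNReal.ofReal t * A := by
      conv_lhs => rw [hA]
      refine iSup_le fun x => ?_
      rw [← ENNReal.div_le_iff hA0 hAt]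
      rw [← ENNReal.ofReal_toReal (ne_top_of_le_ne_top (by simp) (f1 x))]
      exact ENNReal.ofReal_le_ofReal (hcon x)
    have h2 : ENNReal.ofReal t * A < 1 * A := by
      rw [ENNReal.mul_lt_mul_iff_left hA0 hAt]
      simpa using ht
    rw [one_mul] at h2
    exact absurd this (not_le.2 h2)
  · intro t ht
    by_contra! hcon
    have : B ≤ ENNReal.ofReal t * B := by
      conv_lhs => rw [hB]
      refine iSup_le fun x => ?_
      rw [← ENNReal.div_le_iff hB0 hBt]
      rw [← ENNReal.ofReal_toReal (ne_top_of_le_ne_top (by simp) (g1 x))]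
      exact ENNReal.ofReal_le_ofReal (hcon x)
    have h2 : ENNReal.ofReal t * B < 1 * B := by
      rw [ENNReal.mul_lt_mul_iff_left hB0 hBt]
      simpa using ht
    rw [one_mul] at h2
    exact absurd this (not_le.2 h2)
  · intro x y t ht htf htg
    have h1 : f x / A * (g y / B) ≤ (min (h ((x+y)/2) / r) 1) ^ 2 := by
      rcases min_choice (h ((x+y)/2) / r) 1 with e | e <;> rw [e]
      · calc f x / A * (g y / B) = A⁻¹ * B⁻¹ * (f x * g y) := by
              simp only [div_eq_mul_inv]; ring
          _ ≤ A⁻¹ * B⁻¹ * h ((x + y) / 2) ^ 2 := mul_le_mul_right (H x y) _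
          _ = (r ^ 2)⁻¹ * h ((x + y) / 2) ^ 2 := by
              rw [hr, ENNReal.mul_inv (.inl hA0) (.inl hAt)]
          _ = (h ((x + y) / 2) / r) ^ 2 := by rw [ENNReal.inv_pow, div_eq_mul_inv (h _) r, mul_pow, mul_comm]
      · simpa using mul_le_mul' (f1 x) (g1 y)
    have h2 := ENNReal.toReal_mono (by simp) h1
    rw [ENNReal.toReal_mul, ENNReal.toReal_pow] at h2
    refine lt_of_pow_lt_pow_left₀ 2 ENNReal.toReal_nonneg (lt_of_lt_of_le ?_ h2)
    rw [sq]
    exact mul_lt_mul'' htf htg ht.le ht.le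

lemma pl_one {f g h : ℝ → ℝ≥0∞} (hf : Measurable f) (hg : Measurable g) (hh : Measurable h)
    (H : ∀ x y, f x * g y ≤ h ((x + y) / 2) ^ 2) :
    (∫⁻ x, f x) * (∫⁻ x, g x) ≤ (∫⁻ x, h x) ^ 2 := by
  have e : ∀ f : ℝ → ℝ≥0∞, Measurable f → ∫⁻ x, f x = ⨆ n : ℕ, ∫⁻ x, min (f x) n := by
    intro f hf
    rw [← lintegral_iSup (fun n => by fun_prop) (fun n m hnm x => by dsimp; gcongr)]
    congr 1; ext x
    have := inf_iSup_eq (f x) (fun n : ℕ => (n : ℝ≥0∞))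
    rw [ENNReal.iSup_natCast] at this
    simpa using this
  have mono : ∀ f : ℝ → ℝ≥0∞, Monotone fun n : ℕ => ∫⁻ x, min (f x) n := 
    fun f n m hnm => lintegral_mono fun x => by dsimp; gcongr
  rw [e f hf, e g hg, ENNReal.iSup_mul]
  refine iSup_le fun n' => ?_
  rw [ENNReal.mul_iSup]
  refine iSup_le fun m' => ?_
  obtain ⟨n, hn, hm⟩ : ∃ n, n' ≤ n ∧ m' ≤ n := ⟨max n' m', le_max_left _ _, le_max_right _ _⟩
  refine (mul_le_mul' (mono f hn) (mono g hm)).trans ?_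
  refine pl_bdd (N := n) (by fun_prop) (by fun_prop) hh (by simp) (by simp) (by simp) ?_
  intro x y
  exact le_trans (mul_le_mul' (min_le_left _ _) (min_le_left _ _)) (H x y)

lemma pl_pi : ∀ {n : ℕ} {f g h : (Fin n → ℝ) → ℝ≥0∞} (_ : Measurable f) (_ : Measurable g)
    (_ : Measurable h)
    (_ : ∀ x y, f x * g y ≤ h (fun i => (x i + y i) / 2) ^ 2),
    (∫⁻ x, f x) * (∫⁻ x, g x) ≤ (∫⁻ x, h x) ^ 2
  | 0, f, g, h, hf, hg, hh, H => by
    have e : ∀ f : (Fin 0 → ℝ) → ℝ≥0∞, ∫⁻ x, f x = f 0 := by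
      intro f
      have : ∀ x, f x = f 0 := fun x => by congr 1; exact Subsingleton.elim _ _
      simp only [this]
      simp [volume_pi]
    rw [e, e, e]
    convert H 0 0 using 3
  | n+1, f, g, h, hf, hg, hh, H => by
    have e : ∀ f : (Fin (n+1) → ℝ) → ℝ≥0∞, Measurable f →
        ∫⁻ x, f x = ∫⁻ t : ℝ, ∫⁻ x : Fin n → ℝ, f (Fin.cons t x) := by
      intro f hf
      have := (volume_preserving_piFinSuccAbove (fun _ : Fin (n+1) => ℝ) 0).symm
      rw [← this.lintegral_comp hf, Measure.volume_eq_prod, lintegral_prod _ (by fun_prop)]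
      refine lintegral_congr fun t => lintegral_congr fun x => ?_
      simp [MeasurableEquiv.piFinSuccAbove, Fin.insertNthEquiv]
    have m : Measurable (fun q : ℝ × (Fin n → ℝ) => (Fin.cons q.1 q.2 : Fin (n+1) → ℝ)) := 
      measurable_pi_iff.2 fun i => by
        refine Fin.cases ?_ (fun i => ?_) i <;> simp <;> fun_prop
    have mm : ∀ f : (Fin (n+1) → ℝ) → ℝ≥0∞, Measurable f →
        Measurable fun t : ℝ => ∫⁻ x : Fin n → ℝ, f (Fin.cons t x) := fun f hf =>
      Measurable.lintegral_prod_right (f := fun t x => f (Fin.cons t x)) (hf.comp m)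
    have ms : ∀ f : (Fin (n+1) → ℝ) → ℝ≥0∞, Measurable f → ∀ t : ℝ, 
        Measurable fun x : Fin n → ℝ => f (Fin.cons t x) := fun f hf t =>
      hf.comp (m.comp (by fun_prop : Measurable fun x => (t, x)))
    rw [e f hf, e g hg, e h hh]
    refine pl_one (mm f hf) (mm g hg) (mm h hh) ?_
    intro s t
    refine pl_pi (ms f hf s) (ms g hg t) (ms h hh _) ?_
    intro x y
    convert H (Fin.cons s x) (Fin.cons t y) using 3
    ext i
    refine Fin.cases ?_ (fun i => ?_) i <;> simp

lemma pl_euclid {n : ℕ} {f g h : EuclideanSpace ℝ (Fin n) → ℝ≥0∞} (hf : Measurable f)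
    (hg : Measurable g) (hh : Measurable h)
    (H : ∀ x y, f x * g y ≤ h ((2:ℝ)⁻¹ • (x + y)) ^ 2) :
    (∫⁻ x, f x) * (∫⁻ x, g x) ≤ (∫⁻ x, h x) ^ 2 := by
  have := PiLp.volume_preserving_toLp (Fin n)
  rw [← this.lintegral_comp hf, ← this.lintegral_comp hg, ← this.lintegral_comp hh]
  refine pl_pi (by fun_prop) (by fun_prop) (by fun_prop) ?_
  intro x y
  convert H (WithLp.toLp 2 x) (WithLp.toLp 2 y) using 3
  ext i
  simp; ring

lemma hess_le_of_midpoint {E : Type*} [NormedAddCommGroup E] [InnerProductSpace ℝ E]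
    [CompleteSpace E] {L : E → ℝ} {S : E → E} (hL : ∀ z, HasGradientAt L (S z) z)
    {x : E} {S' : E →L[ℝ] E} (hS : HasFDerivAt S S' x) (w : E) (c : ℝ)
    (H : ∀ h : ℝ, L (x + h • w) + L (x - h • w) + c * h ^ 2 * ‖w‖ ^ 2 ≤ 2 * L x) :
    ⟪w, S' w⟫ ≤ - c * ‖w‖ ^ 2 := by
  by_contra! hcon
  set g : ℝ → ℝ := fun h => L (x + h • w) + L (x - h • w) + c * h ^ 2 * ‖w‖ ^ 2 with hg
  have l1 : ∀ h : ℝ, HasDerivAt (fun h : ℝ => x + h • w) w h := fun h => by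
    simpa using ((hasDerivAt_id h).smul_const w).const_add x
  have l2 : ∀ h : ℝ, HasDerivAt (fun h : ℝ => x - h • w) (-w) h := fun h => by
    simpa using ((hasDerivAt_id h).smul_const w).const_sub x
  have d1 : ∀ h : ℝ, HasDerivAt g
      (⟪S (x + h • w), w⟫ - ⟪S (x - h • w), w⟫ + 2 * c * h * ‖w‖ ^ 2) h := by
    intro h
    have e1 := (hL (x + h • w)).hasFDerivAt.comp_hasDerivAt h (l1 h)
    have e2 := (hL (x - h • w)).hasFDerivAt.comp_hasDerivAt h (l2 h)
    have e3 := (((hasDerivAt_id h).pow 2).const_mul c).mul_const (‖w‖ ^ 2)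
    refine ((e1.add e2).add e3).congr_deriv ?_
    simp [InnerProductSpace.toDual_apply_apply]
    ring
  have dg : deriv g = fun h : ℝ =>
      ⟪S (x + h • w), w⟫ - ⟪S (x - h • w), w⟫ + 2 * c * h * ‖w‖ ^ 2 :=
    funext fun h => (d1 h).deriv
  have d2 : HasDerivAt (deriv g) (2 * ⟪w, S' w⟫ + 2 * c * ‖w‖ ^ 2) 0 := by
    rw [dg]
    have hS1 : HasFDerivAt S S' (x + (0:ℝ) • w) := by simpa using hS
    have hS2 : HasFDerivAt S S' (x - (0:ℝ) • w) := by simpa using hS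
    have e1 := (hS1.comp_hasDerivAt 0 (l1 0)).inner ℝ (hasDerivAt_const (0:ℝ) w)
    have e2 := (hS2.comp_hasDerivAt 0 (l2 0)).inner ℝ (hasDerivAt_const (0:ℝ) w)
    have e3 := ((hasDerivAt_id (0:ℝ)).const_mul (2 * c)).mul_const (‖w‖ ^ 2)
    refine ((e1.sub e2).add e3).congr_deriv ?_
    simp [real_inner_comm]
    ring
  have hmin : IsLocalMin g 0 := by
    refine isLocalMin_of_deriv_deriv_pos ?_ ?_ (d1 0).continuousAt
    · rw [d2.deriv]; linarith
    · rw [dg]; simp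
  have hev : g =ᶠ[nhds 0] fun _ => g 0 := by
    filter_upwards [hmin] with h hh
    refine le_antisymm ?_ hh
    have := H h
    simp only [hg]
    simp
    linarith
  have := hev.deriv.deriv_eq
  rw [d2.deriv] at this
  simp at this
  linarith

lemma semiconvex_mid {E : Type*} [NormedAddCommGroup E] [InnerProductSpace ℝ E]
    {O : Set E} (hO : IsOpen O) (hc : Convex ℝ O) {U : E → ℝ} (hU : ContDiffOn ℝ 2 U O)
    {κ : ℝ} (hκ : ∀ y ∈ O, ∀ w : E, κ * ‖w‖ ^ 2 ≤ iteratedFDeriv ℝ 2 U y ![w, w])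
    {y₁ y₂ : E} (h₁ : y₁ ∈ O) (h₂ : y₂ ∈ O) :
    2 * U ((2:ℝ)⁻¹ • (y₁ + y₂)) + κ / 4 * ‖y₁ - y₂‖ ^ 2 ≤ U y₁ + U y₂ := by
  set m := (2:ℝ)⁻¹ • (y₁ + y₂) with hm
  set e := (2:ℝ)⁻¹ • (y₁ - y₂) with he
  have e1 : m + (1:ℝ) • e = y₁ := by rw [hm, he]; module
  have e2 : m + (-1:ℝ) • e = y₂ := by rw [hm, he]; module
  have hmem : ∀ r ∈ Icc (-1:ℝ) 1, m + r • e ∈ O := by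
    intro r hr
    have := hc h₁ h₂ (a := (1 + r) / 2) (b := (1 - r) / 2) (by linarith [hr.1])
      (by linarith [hr.2]) (by ring)
    convert this using 1
    rw [hm, he]; module
  have l1 : ∀ h : ℝ, HasDerivAt (fun h : ℝ => m + h • e) e h := fun h => by
    simpa using ((hasDerivAt_id h).smul_const e).const_add m
  have dU : ∀ y ∈ O, HasFDerivAt U (fderiv ℝ U y) y := fun y hy =>
    ((hU.contDiffAt (hO.mem_nhds hy)).differentiableAt (by norm_num)).hasFDerivAt
  have ddU : ∀ y ∈ O, HasFDerivAt (fderiv ℝ U) (fderiv ℝ (fderiv ℝ U) y) y := fun y hy =>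
    (((hU.contDiffAt (hO.mem_nhds hy)).fderiv_right (m := 1) (by norm_num)).differentiableAt
      (by norm_num)).hasFDerivAt
  set φ : ℝ → ℝ := fun r => U (m + r • e) - κ / 2 * r ^ 2 * ‖e‖ ^ 2 with hφ
  have d1 : ∀ r ∈ Icc (-1:ℝ) 1, HasDerivAt φ (fderiv ℝ U (m + r • e) e - κ * r * ‖e‖ ^ 2) r := by
    intro r hr
    have a1 := (dU _ (hmem r hr)).comp_hasDerivAt r (l1 r)
    have a3 := (((hasDerivAt_id r).pow 2).const_mul (κ / 2)).mul_const (‖e‖ ^ 2)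
    refine (a1.sub a3).congr_deriv ?_
    simp only [id]
    push_cast
    ring
  have d2 : ∀ r ∈ Icc (-1:ℝ) 1, HasDerivAt (fun r : ℝ => fderiv ℝ U (m + r • e) e - κ * r * ‖e‖ ^ 2)
      (fderiv ℝ (fderiv ℝ U) (m + r • e) e e - κ * ‖e‖ ^ 2) r := by
    intro r hr
    have a0 : HasDerivAt (fun r : ℝ => fderiv ℝ U (m + r • e))
        (fderiv ℝ (fderiv ℝ U) (m + r • e) e) r := (ddU _ (hmem r hr)).comp_hasDerivAt r (l1 r)
    have a1 : HasDerivAt (fun r : ℝ => fderiv ℝ U (m + r • e) e)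
        (fderiv ℝ (fderiv ℝ U) (m + r • e) e e) r :=
      (ContinuousLinearMap.apply ℝ ℝ e).hasFDerivAt.comp_hasDerivAt r a0
    have a3 := ((hasDerivAt_id r).const_mul κ).mul_const (‖e‖ ^ 2)
    refine (a1.sub a3).congr_deriv ?_
    simp
  have hconv : ConvexOn ℝ (Icc (-1:ℝ) 1) φ := by
    refine convexOn_of_hasDerivWithinAt2_nonneg (convex_Icc _ _)
      (fun r hr => (d1 r hr).continuousAt.continuousWithinAt)
      (fun r hr => (d1 r (interior_subset hr)).hasDerivWithinAt)
      (fun r hr => (d2 r (interior_subset hr)).hasDerivWithinAt) ?_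
    intro r hr
    have := hκ _ (hmem r (interior_subset hr)) e
    rw [iteratedFDeriv_two_apply] at this
    simp at this
    linarith
  have := hconv.2 (show (1:ℝ) ∈ Icc (-1:ℝ) 1 by simp) (show (-1:ℝ) ∈ Icc (-1:ℝ) 1 by simp)
    (show (0:ℝ) ≤ 1/2 by norm_num) (show (0:ℝ) ≤ 1/2 by norm_num) (by norm_num)
  simp only [hφ, e1, e2] at this
  have he4 : ‖e‖ ^ 2 = 1 / 4 * ‖y₁ - y₂‖ ^ 2 := by
    rw [he, norm_smul, mul_pow]; norm_num
  rw [he4] at this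
  norm_num at this
  linarith

lemma hasFDerivAt_conv {E F : Type*} [NormedAddCommGroup E] [InnerProductSpace ℝ E]
    [FiniteDimensional ℝ E] [MeasurableSpace E] [BorelSpace E]
    [NormedAddCommGroup F] [NormedSpace ℝ F] 
    (ν : Measure E) [IsProbabilityMeasure ν] (β : ℝ) {Γ : E → F} {Γ' : E → E →L[ℝ] F}
    (h : ∀ u, HasFDerivAt Γ (Γ' u) u) (hc : Continuous Γ') {A B : ℝ} (hA : ∀ u, ‖Γ u‖ ≤ A)
    (hB : ∀ u, ‖Γ' u‖ ≤ B) (x : E) :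
    HasFDerivAt (fun x => ∫ y, Γ (x - β • y) ∂ν) (∫ y, Γ' (x - β • y) ∂ν) x := by
  have hcΓ : Continuous Γ := continuous_iff_continuousAt.2 fun u => (h u).continuousAt
  have hm : ∀ x : E, AEStronglyMeasurable (fun y => Γ (x - β • y)) ν := fun x =>
    (hcΓ.comp (by fun_prop : Continuous fun y : E => x - β • y)).aestronglyMeasurable
  refine hasFDerivAt_integral_of_dominated_of_fderiv_le (F := fun x y => Γ (x - β • y))
    (F' := fun x y => Γ' (x - β • y)) (s := univ)
    (bound := fun _ => B) Filter.univ_mem (.of_forall hm) ?_ ?_ ?_ (integrable_const _) ?_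
  · exact Integrable.of_bound (hm x) A (.of_forall fun y => hA _)
  · exact (hc.comp (by fun_prop : Continuous fun y : E => x - β • y)).aestronglyMeasurable
  · exact .of_forall fun y x _ => hB _
  · refine .of_forall fun y x _ => ?_
    exact (h (x - β • y)).comp x ((hasFDerivAt_id x).sub_const (β • y))

lemma gauss_second {E W : Type*} [NormedAddCommGroup E] [NormedSpace ℝ E]
    [NormedAddCommGroup W] [NormedSpace ℝ W] (J : E →L[ℝ] W) (Jn : ∀ u, ‖J u‖ = ‖u‖)
    {G : E → ℝ} {G' : E → E →L[ℝ] ℝ} {k : ℝ} (hk : 0 < k) (d1 : ∀ u, HasFDerivAt G (G' u) u)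
    (cG : Continuous G) (cG' : Continuous G') (b0 : ∀ u, ‖G u‖ ≤ 1)
    (b2 : ∀ u, G u * ‖u‖ ^ 2 ≤ 1 / k) (n1 : ∀ u, ‖G' u‖ = 2 * k * (G u * ‖u‖)) :
    ∃ G'' : E → E →L[ℝ] W, (∀ u, HasFDerivAt (fun u => (-2 * k * G u) • J u) (G'' u) u) ∧
      Continuous G'' ∧
      (∀ u, ‖G'' u‖ ≤ 2 * k * ‖J‖ + 4 * k ^ 2 * (1 / k)) := by
  refine ⟨fun u => (-2 * k * G u) • J + ((-2 * k) • G' u).smulRight (J u), ?_, ?_, ?_⟩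
  · intro u
    exact ((d1 u).const_mul (-2 * k)).smul J.hasFDerivAt
  · have : Continuous fun u => ((-2 * k) • G' u).smulRight (J u) :=
      (((ContinuousLinearMap.smulRightL ℝ E W).continuous.comp
        (cG'.const_smul (-2 * k))).clm_apply J.continuous)
    exact ((continuous_const.mul cG).smul continuous_const).add this
  · intro u
    refine (norm_add_le _ _).trans (add_le_add ?_ ?_)
    · rw [norm_smul, norm_mul, norm_mul]
      have := b0 u
      rw [show ‖(-2:ℝ)‖ = 2 by norm_num, Real.norm_of_nonneg hk.le]
      refine mul_le_mul_of_nonneg_right ?_ (norm_nonneg _)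
      nlinarith
    · rw [ContinuousLinearMap.norm_smulRight_apply, norm_smul, Jn, n1, norm_mul,
        show ‖(-2:ℝ)‖ = 2 by norm_num, Real.norm_of_nonneg hk.le]
      calc _ = 4 * k ^ 2 * (G u * ‖u‖ ^ 2) := by ring
        _ ≤ _ := mul_le_mul_of_nonneg_left (b2 u) (by positivity)

lemma gauss_conv_smooth {E : Type*} [NormedAddCommGroup E] [InnerProductSpace ℝ E]
    [FiniteDimensional ℝ E] [MeasurableSpace E] [BorelSpace E]
    (ν : Measure E) [IsProbabilityMeasure ν] (β k : ℝ) (hk : 0 < k) :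
    ∃ (P' : E → E →L[ℝ] ℝ) (P'' : E → E →L[ℝ] E →L[ℝ] ℝ), ∀ x,
      HasFDerivAt (fun x => ∫ y, exp (-k * ‖x - β • y‖ ^ 2) ∂ν) (P' x) x ∧
      HasFDerivAt P' (P'' x) x := by
  obtain ⟨J, hJ⟩ : ∃ J : E →L[ℝ] E →L[ℝ] ℝ, J = innerSL ℝ := ⟨innerSL ℝ, rfl⟩
  have Jn : ∀ u, ‖J u‖ = ‖u‖ := fun u => by rw [hJ]; exact innerSL_apply_norm ℝ u
  have Ja : ∀ u z, J u z = ⟪u, z⟫ := fun u z => by rw [hJ]; rfl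
  set G : E → ℝ := fun u => exp (-k * ‖u‖ ^ 2) with hG
  set G' : E → E →L[ℝ] ℝ := fun u => (-2 * k * G u) • J u with hG'
  have d1 : ∀ u, HasFDerivAt G (G' u) u := by
    intro u
    have := ((hasStrictFDerivAt_norm_sq u).hasFDerivAt.const_mul (-k)).exp
    convert this using 1
    ext z
    simp [hG', hG, Ja]
    ring
  have cG : Continuous G := by fun_prop
  have cG' : Continuous G' := by fun_prop
  have b0 : ∀ u, ‖G u‖ ≤ 1 := by
    intro u
    simp only [hG, Real.norm_eq_abs, abs_exp, exp_le_one_iff]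
    nlinarith [sq_nonneg ‖u‖]
  have G0 : ∀ u, 0 ≤ G u := fun u => (exp_pos _).le
  have b2 : ∀ u, G u * ‖u‖ ^ 2 ≤ 1 / k := by
    intro u
    rw [le_div_iff₀ hk]
    have h1 := add_one_le_exp (k * ‖u‖ ^ 2)
    have h2 : G u * exp (k * ‖u‖ ^ 2) = 1 := by
      simp only [hG]; rw [← exp_add]; simp
    nlinarith [mul_le_mul_of_nonneg_left h1 (G0 u), G0 u]
  have b1 : ∀ u, G u * ‖u‖ ≤ 1 + 1 / k := by
    intro u
    have h0 := b0 u
    rw [Real.norm_of_nonneg (G0 u)] at h0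
    nlinarith [b2 u, mul_nonneg (G0 u) (sq_nonneg (‖u‖ - 1)), mul_nonneg (G0 u) (sq_nonneg (‖u‖)), G0 u]
  have n1 : ∀ u, ‖G' u‖ = 2 * k * (G u * ‖u‖) := by
    intro u
    simp only [hG', norm_smul, Jn]
    rw [Real.norm_eq_abs, abs_mul, abs_mul, abs_of_nonneg (G0 u), abs_of_pos hk]
    norm_num
    ring
  have bG' : ∀ u, ‖G' u‖ ≤ 2 * k * (1 + 1 / k) := fun u => by
    rw [n1]; exact mul_le_mul_of_nonneg_left (b1 u) (by positivity)
  obtain ⟨G'', d2, cG'', bG''⟩ := gauss_second J Jn hk d1 cG cG' b0 b2 n1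
  exact ⟨fun x => ∫ y, G' (x - β • y) ∂ν, fun x => ∫ y, G'' (x - β • y) ∂ν, fun x =>
    ⟨hasFDerivAt_conv ν β d1 cG' b0 bG' x, hasFDerivAt_conv ν β d2 cG'' bG' bG'' x⟩⟩

lemma gauss_conv_mid {d : ℕ} {κ : ℝ}
    {Ω : Set (EuclideanSpace ℝ (Fin d))} (hΩ_conv : Convex ℝ Ω)
    {U : EuclideanSpace ℝ (Fin d) → ℝ}
    (hU_C2 : ContDiffOn ℝ 2 U Ω)
    (hU_conc : ∀ y ∈ Ω, ∀ w : EuclideanSpace ℝ (Fin d),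
      κ * ‖w‖ ^ 2 ≤ iteratedFDeriv ℝ 2 U y ![w, w])
    (ν : Measure (EuclideanSpace ℝ (Fin d))) [IsProbabilityMeasure ν]
    (hν : ν = (volume.restrict Ω).withDensity (fun y => ENNReal.ofReal (exp (-U y))))
    {β k c : ℝ} (hk : 0 < k)
    (hq : ∀ u v : EuclideanSpace ℝ (Fin d), c * ‖u‖ ^ 2 ≤ κ * ‖v‖ ^ 2 + 2 * k * ‖u - β • v‖ ^ 2)
    (x₁ x₂ : EuclideanSpace ℝ (Fin d)) :
    (∫ y, exp (-k * ‖x₁ - β • y‖ ^ 2) ∂ν) * (∫ y, exp (-k * ‖x₂ - β • y‖ ^ 2) ∂ν) ≤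
      ((∫ y, exp (-k * ‖(2:ℝ)⁻¹ • (x₁ + x₂) - β • y‖ ^ 2) ∂ν) *
        exp (- c / 8 * ‖x₁ - x₂‖ ^ 2)) ^ 2 := by
  classical
  set O := interior Ω with hOdef
  have hO : IsOpen O := isOpen_interior
  have hOc : Convex ℝ O := hΩ_conv.interior
  have hUO : ContDiffOn ℝ 2 U O := hU_C2.mono interior_subset
  have hres : (volume : Measure (EuclideanSpace ℝ (Fin d))).restrict Ω = volume.restrict O := by
    refine Measure.restrict_congr_set ?_
    exact (interior_ae_eq_of_null_frontier (hΩ_conv.addHaar_frontier volume)).symm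
  rw [hres] at hν
  set D : EuclideanSpace ℝ (Fin d) → EuclideanSpace ℝ (Fin d) → ℝ≥0∞ := fun x =>
    O.indicator fun y => ENNReal.ofReal (exp (-U y - k * ‖x - β • y‖ ^ 2)) with hD
  have mD : ∀ x, Measurable (D x) := by
    intro x
    have hcont : ContinuousOn (fun y => ENNReal.ofReal (exp (-U y - k * ‖x - β • y‖ ^ 2))) O := by
      refine ENNReal.continuous_ofReal.comp_continuousOn (continuous_exp.comp_continuousOn ?_)
      exact hUO.continuousOn.neg.sub (by fun_prop)
    have := (hcont.measurable_piecewise (g := fun _ => (0:ℝ≥0∞)) continuousOn_const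
      hO.measurableSet)
    have e : D x = O.piecewise (fun y => ENNReal.ofReal (exp (-U y - k * ‖x - β • y‖ ^ 2)))
      (fun _ => (0:ℝ≥0∞)) := by
      simp only [hD]
      rw [← piecewise_eq_indicator]; rfl
    rw [e]
    convert this
  have aeU : AEMeasurable (fun y => ENNReal.ofReal (exp (-U y))) (volume.restrict O) := by
    refine ContinuousOn.aemeasurable ?_ hO.measurableSet
    exact ENNReal.continuous_ofReal.comp_continuousOn
      (continuous_exp.comp_continuousOn hUO.continuousOn.neg)
  have hi : ∀ x, Integrable (fun y => exp (-k * ‖x - β • y‖ ^ 2)) ν := by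
    intro x
    refine Integrable.of_bound (Continuous.aestronglyMeasurable (by fun_prop)) 1
      (.of_forall fun y => ?_)
    simp only [Real.norm_eq_abs, abs_exp, exp_le_one_iff]
    nlinarith [sq_nonneg ‖x - β • y‖]
  have hP : ∀ x, ENNReal.ofReal (∫ y, exp (-k * ‖x - β • y‖ ^ 2) ∂ν) = ∫⁻ y, D x y := by
    intro x
    rw [ofReal_integral_eq_lintegral_ofReal (hi x) (.of_forall fun y => (exp_pos _).le)]
    conv_lhs => rw [hν]
    rw [lintegral_withDensity_eq_lintegral_mul₀ aeU (Measurable.aemeasurable (by fun_prop)),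
      hD, lintegral_indicator hO.measurableSet]
    refine lintegral_congr fun y => ?_
    rw [Pi.mul_apply, ← ENNReal.ofReal_mul (exp_pos _).le, ← exp_add]
    congr 2
    ring
  have P0 : ∀ x, 0 ≤ ∫ y, exp (-k * ‖x - β • y‖ ^ 2) ∂ν := fun x =>
    integral_nonneg fun y => (exp_pos _).le
  have key := pl_euclid (mD x₁) (mD x₂)
    ((mD ((2:ℝ)⁻¹ • (x₁ + x₂))).mul_const (ENNReal.ofReal (exp (- c / 8 * ‖x₁ - x₂‖ ^ 2)))) ?_
  · rw [lintegral_mul_const _ (mD _), ← hP, ← hP, ← hP, ← ENNReal.ofReal_mul (P0 _),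
      ← ENNReal.ofReal_mul (P0 _), ← ENNReal.ofReal_pow (mul_nonneg (P0 _) (exp_pos _).le),
      ENNReal.ofReal_le_ofReal_iff (by positivity)] at key
    exact key
  · intro y₁ y₂
    by_cases h₁ : y₁ ∈ O
    swap
    · simp [hD, h₁]
    by_cases h₂ : y₂ ∈ O
    swap
    · simp [hD, h₂]
    have hm : (2:ℝ)⁻¹ • (y₁ + y₂) ∈ O := by
      have := hOc h₁ h₂ (show (0:ℝ) ≤ 2⁻¹ by norm_num) (show (0:ℝ) ≤ 2⁻¹ by norm_num)
        (by norm_num)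
      rwa [← smul_add] at this
    simp only [hD, indicator_of_mem h₁, indicator_of_mem h₂, indicator_of_mem hm]
    rw [← ENNReal.ofReal_mul (exp_pos _).le, ← ENNReal.ofReal_mul (exp_pos _).le,
      ← ENNReal.ofReal_pow (by positivity), ← exp_add, ← exp_add, ← exp_nat_mul]
    refine ENNReal.ofReal_le_ofReal (exp_le_exp.2 ?_)
    have hsc := semiconvex_mid hO hOc hUO (fun y hy => hU_conc y (interior_subset hy)) h₁ h₂
    have hqq := hq (x₁ - x₂) (y₁ - y₂)
    have par := parallelogram_law_with_norm ℝ (x₁ - β • y₁) (x₂ - β • y₂)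
    have e1 : (x₁ - β • y₁) - (x₂ - β • y₂) = x₁ - x₂ - β • (y₁ - y₂) := by module
    have e2 : ‖(x₁ - β • y₁) + (x₂ - β • y₂)‖ =
        2 * ‖(2:ℝ)⁻¹ • (x₁ + x₂) - β • (2:ℝ)⁻¹ • (y₁ + y₂)‖ := by
      have : (x₁ - β • y₁) + (x₂ - β • y₂) =
        (2:ℝ) • ((2:ℝ)⁻¹ • (x₁ + x₂) - β • (2:ℝ)⁻¹ • (y₁ + y₂)) := by module
      rw [this, norm_smul]; norm_num
    rw [e1, e2] at par
    have par2 := congrArg (fun z => k * z) par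
    push_cast
    nlinarith

/-- **Upper Jacobian bound for κ-semi-log-concave targets.** If `ν(dy) = exp(−U(y)) dy`
on a convex support with `∇²U ⪰ κ I` there, then for every `t ∈ (0,1)` with
`κ a_t² + b_t² > 0` and every `x`,
`∇_x v(t,x) ⪯ ((κ a_t ȧ_t + b_t ḃ_t)/(κ a_t² + b_t²)) I` (as quadratic forms). -/
theorem velocity_jacobian_upper_bound_semi_log_concave
    (d : ℕ) (hd : 1 ≤ d)
    (κ : ℝ)
    (Ω : Set (EuclideanSpace ℝ (Fin d))) (hΩ_conv : Convex ℝ Ω)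
    (U : EuclideanSpace ℝ (Fin d) → ℝ)
    (hU_C2 : ContDiffOn ℝ 2 U Ω)
    (hU_conc : ∀ y ∈ Ω, ∀ w : EuclideanSpace ℝ (Fin d),
      κ * ‖w‖ ^ 2 ≤ iteratedFDeriv ℝ 2 U y ![w, w])
    (ν : Measure (EuclideanSpace ℝ (Fin d))) [IsProbabilityMeasure ν]
    (hν : ν = (volume.restrict Ω).withDensity (fun y => ENNReal.ofReal (exp (-U y))))
    (hmom : Integrable (fun y => ‖y‖ ^ 2) ν)
    -- interpolation coefficients
    (a b : ℝ → ℝ)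
    (ha'_nonpos : ∀ t ∈ Icc (0:ℝ) 1, deriv a t ≤ 0)
    (hb'_nonneg : ∀ t ∈ Icc (0:ℝ) 1, 0 ≤ deriv b t)
    (ha0 : 0 < a 0) (hb0 : 0 ≤ b 0) (ha1 : a 1 = 0) (hb1 : b 1 = 1)
    (ha_pos : ∀ t ∈ Ioo (0:ℝ) 1, 0 < a t)
    (hb_pos : ∀ t ∈ Ioo (0:ℝ) 1, 0 < b t)
    (ha_C2 : ContDiffOn ℝ 2 a (Ico 0 1))
    (hb_C2 : ContDiffOn ℝ 2 b (Ico 0 1))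
    (ha2_C1 : ContDiffOn ℝ 1 (fun t => (a t) ^ 2) (Icc 0 1))
    (hb_C1 : ContDiffOn ℝ 1 b (Icc 0 1))
    -- marginal density, score and velocity field
    (p : ℝ → EuclideanSpace ℝ (Fin d) → ℝ)
    (hp : ∀ t x, p t x =
      ∫ y, (2 * π * (a t) ^ 2) ^ (-(d:ℝ)/2) * exp (-‖x - b t • y‖ ^ 2 / (2 * (a t) ^ 2)) ∂ν)
    (s : ℝ → EuclideanSpace ℝ (Fin d) → EuclideanSpace ℝ (Fin d))
    (hs : ∀ t ∈ Ioo (0:ℝ) 1, ∀ x, s t x = gradient (fun z => Real.log (p t z)) x)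
    (v : ℝ → EuclideanSpace ℝ (Fin d) → EuclideanSpace ℝ (Fin d))
    (hv : ∀ t ∈ Ioo (0:ℝ) 1, ∀ x,
      v t x = (deriv b t / b t) • x
        + ((deriv b t / b t) * (a t) ^ 2 - deriv a t * a t) • s t x) :
    ∀ t ∈ Ioo (0:ℝ) 1, κ * (a t) ^ 2 + (b t) ^ 2 > 0 →
      ∀ x, ∀ w : EuclideanSpace ℝ (Fin d),
        ⟪w, fderiv ℝ (v t) x w⟫
          ≤ ((κ * a t * deriv a t + b t * deriv b t) / (κ * (a t) ^ 2 + (b t) ^ 2))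
              * ‖w‖ ^ 2 := by
  intro t ht hpos x w
  have hα := ha_pos t ht
  have hβ := hb_pos t ht
  have hα' := ha'_nonpos t ⟨ht.1.le, ht.2.le⟩
  have hβ' := hb'_nonneg t ⟨ht.1.le, ht.2.le⟩
  have hp' := hp t
  have hs' := hs t ht
  have hv' := hv t ht
  generalize a t = α at *
  generalize b t = β at *
  generalize deriv a t = α' at *
  generalize deriv b t = β' at *
  have hα2 : 0 < α ^ 2 := by positivity
  obtain ⟨k, hkd⟩ : ∃ k, k = 1 / (2 * α ^ 2) := ⟨_, rfl⟩
  have hk : 0 < k := by rw [hkd]; positivity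
  obtain ⟨c, hcd⟩ : ∃ c, c = κ / (κ * α ^ 2 + β ^ 2) := ⟨_, rfl⟩
  set P : EuclideanSpace ℝ (Fin d) → ℝ := fun z => ∫ y, exp (-k * ‖z - β • y‖ ^ 2) ∂ν with hP
  have hi : ∀ x, Integrable (fun y => exp (-k * ‖x - β • y‖ ^ 2)) ν := by
    intro x
    refine Integrable.of_bound (Continuous.aestronglyMeasurable (by fun_prop)) 1
      (.of_forall fun y => ?_)
    simp only [Real.norm_eq_abs, abs_exp, exp_le_one_iff]
    nlinarith [sq_nonneg ‖x - β • y‖]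
  have Ppos : ∀ z, 0 < P z := fun z => integral_exp_pos (hi z)
  obtain ⟨P', P'', hPd⟩ := gauss_conv_smooth ν β k hk
  have hC : 0 < (2 * π * α ^ 2) ^ (-(d:ℝ)/2) := by positivity
  have hpP : p t = fun z => (2 * π * α ^ 2) ^ (-(d:ℝ)/2) * P z := by
    funext z
    rw [hp' z, hP, integral_const_mul]
    congr 2
    funext y
    congr 1
    rw [hkd]
    field_simp
  have hlog : (fun z => Real.log (p t z)) =
      fun z => Real.log ((2 * π * α ^ 2) ^ (-(d:ℝ)/2)) + Real.log (P z) := by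
    funext z
    rw [hpP, Real.log_mul hC.ne' (Ppos z).ne']
  have hlogd : ∀ z, HasFDerivAt (fun z => Real.log (P z)) ((P z)⁻¹ • P' z) z := fun z =>
    (hPd z).1.log (Ppos z).ne'
  have hsd : ∀ z, s t z = (InnerProductSpace.toDual ℝ _).symm ((P z)⁻¹ • P' z) := by
    intro z
    rw [hs' z, hlog, gradient, ((hlogd z).const_add _).fderiv]
  have hgrad : ∀ z, HasGradientAt (fun z => Real.log (P z)) (s t z) z := by
    intro z
    rw [hasGradientAt_iff_hasFDerivAt, hsd z, LinearIsometryEquiv.apply_symm_apply]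
    exact hlogd z
  have hsdiff : DifferentiableAt ℝ (s t) x := by
    have e : s t = fun z => (InnerProductSpace.toDual ℝ _).symm ((P z)⁻¹ • P' z) := funext hsd
    rw [e]
    have h1 : DifferentiableAt ℝ (fun z => (P z)⁻¹ • P' z) x :=
      ((hPd x).1.differentiableAt.inv (Ppos x).ne').smul (hPd x).2.differentiableAt
    exact ((InnerProductSpace.toDual ℝ
      (EuclideanSpace ℝ (Fin d))).symm.toContinuousLinearEquiv.differentiableAt).comp x h1
  have hq : ∀ u v : EuclideanSpace ℝ (Fin d),
      c * ‖u‖ ^ 2 ≤ κ * ‖v‖ ^ 2 + 2 * k * ‖u - β • v‖ ^ 2 := by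
    intro u v
    have h1 : 0 ≤ ‖β • u - (κ * α ^ 2 + β ^ 2) • v‖ ^ 2 / (α ^ 2 * (κ * α ^ 2 + β ^ 2)) := by
      positivity
    have h2 : κ * ‖v‖ ^ 2 + 2 * k * ‖u - β • v‖ ^ 2 - c * ‖u‖ ^ 2 =
        ‖β • u - (κ * α ^ 2 + β ^ 2) • v‖ ^ 2 / (α ^ 2 * (κ * α ^ 2 + β ^ 2)) := by
      rw [norm_sub_sq_real, norm_sub_sq_real, norm_smul, norm_smul, norm_smul, mul_pow, mul_pow,
        mul_pow, Real.norm_eq_abs, Real.norm_eq_abs, sq_abs, sq_abs, real_inner_smul_left,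
        real_inner_smul_right, real_inner_smul_right, hkd, hcd]
      have := hpos.ne'
      field_simp
      ring
    linarith
  have hH : ⟪w, fderiv ℝ (s t) x w⟫ ≤ - c * ‖w‖ ^ 2 := by
    refine hess_le_of_midpoint hgrad hsdiff.hasFDerivAt w c ?_
    intro h
    have := gauss_conv_mid hΩ_conv hU_C2 hU_conc ν hν hk hq (x + h • w) (x - h • w)
    have e1 : (2:ℝ)⁻¹ • (x + h • w + (x - h • w)) = x := by module
    have e2 : x + h • w - (x - h • w) = (2 * h) • w := by module
    have e3 : ‖(2 * h) • w‖ ^ 2 = (2 * h) ^ 2 * ‖w‖ ^ 2 := by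
      rw [norm_smul, mul_pow, Real.norm_eq_abs, sq_abs]
    rw [e1, e2, e3] at this
    have h2 : P (x + h • w) * P (x - h • w) ≤
      (P x * exp (-c / 8 * ((2 * h) ^ 2 * ‖w‖ ^ 2))) ^ 2 := this
    have h3 := Real.log_le_log (mul_pos (Ppos _) (Ppos _)) h2
    rw [Real.log_mul (Ppos _).ne' (Ppos _).ne', Real.log_pow,
      Real.log_mul (Ppos _).ne' (exp_pos _).ne', Real.log_exp] at h3
    push_cast at h3
    linarith
  have hvd : fderiv ℝ (v t) x = (β' / β) • ContinuousLinearMap.id ℝ _ +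
      ((β' / β) * α ^ 2 - α' * α) • fderiv ℝ (s t) x := by
    have e : v t = fun x => (β' / β) • x + ((β' / β) * α ^ 2 - α' * α) • s t x := funext hv'
    rw [e]
    exact (((hasFDerivAt_id x).const_smul (β' / β)).add
      (hsdiff.hasFDerivAt.const_smul ((β' / β) * α ^ 2 - α' * α))).fderiv
  have hcoef : 0 ≤ (β' / β) * α ^ 2 - α' * α := by
    have : 0 ≤ (β' / β) * α ^ 2 := by positivity
    nlinarith
  have hval : ⟪w, fderiv ℝ (v t) x w⟫ = (β' / β) * ‖w‖ ^ 2 +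
      ((β' / β) * α ^ 2 - α' * α) * ⟪w, fderiv ℝ (s t) x w⟫ := by
    rw [hvd]
    simp only [add_apply, smul_apply,
      ContinuousLinearMap.id_apply, inner_add_right, real_inner_smul_right,
      real_inner_self_eq_norm_sq]
  rw [hval]
  have hfin : (κ * α * α' + β * β') / (κ * α ^ 2 + β ^ 2) * ‖w‖ ^ 2 =
      (β' / β) * ‖w‖ ^ 2 + ((β' / β) * α ^ 2 - α' * α) * (- c * ‖w‖ ^ 2) := by
    rw [hcd]
    have := hpos.ne'
    field_simp
    ring
  rw [hfin]
  have := mul_le_mul_of_nonneg_left hH hcoef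
  linarith
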